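/- arXiv:1509.03372 — 4 statements merged into one kernel-verified Lean document; each statement's English description precedes it below -/
import Mathlib

section
/- Let a₁, a₂, a₃ ∈ ℝ³ be three points that are not collinear, i.e., the vectors a₁ − a₂ and a₁ − a₃ are linearly independent. Then the stacked 9×6 matrix 𝔾 = [G(a₁); G(a₂); G(a₃)] has full column rank 6; equivalently, if G(aⱼ)ξ = 0 for j = 1, 2, 3 and some ξ = (Ω, ν) ∈ ℝ⁶, then Ω = 0 and ν = 0. -/
open Matrix

noncomputable section

/-- The skew-symmetric matrix `x^×` with `x^× y = x × y`. -/
def skew (x : Fin 3 → ℝ) : Matrix (Fin 3) (Fin 3) ℝ :=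
  !![0, -x 2, x 1; x 2, 0, -x 0; -x 1, x 0, 0]

/-- The inverse `vex` of the map `x ↦ x^×` on skew-symmetric matrices. -/
def vex (A : Matrix (Fin 3) (Fin 3) ℝ) : Fin 3 → ℝ :=
  ![A 2 1, A 0 2, A 1 0]

/-- For `ξ = (Ω, ν) ∈ ℝ⁶`, the 4×4 matrix `ξ^∨ = [[Ω^×, ν],[0,0]]`. -/
def hat4 (Ω ν : Fin 3 → ℝ) : Matrix (Fin 3 ⊕ Fin 1) (Fin 3 ⊕ Fin 1) ℝ :=
  Matrix.fromBlocks (skew Ω) (Matrix.of fun i _ => ν i) 0 0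

/-- The 4×4 pose matrix `[[R, b],[0,1]]`. -/
def pose (R : Matrix (Fin 3) (Fin 3) ℝ) (b : Fin 3 → ℝ) :
    Matrix (Fin 3 ⊕ Fin 1) (Fin 3 ⊕ Fin 1) ℝ :=
  Matrix.fromBlocks R (Matrix.of fun i _ => b i) 0 1

/-- The adjoint matrix `Ad_g = [[R, 0],[b^× R, R]]` for `g = [[R,b],[0,1]]`. -/
def AdMat (R : Matrix (Fin 3) (Fin 3) ℝ) (b : Fin 3 → ℝ) :
    Matrix (Fin 3 ⊕ Fin 3) (Fin 3 ⊕ Fin 3) ℝ :=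
  Matrix.fromBlocks R 0 (skew b * R) R

/-- The 6×6 matrix `ad_ζ = [[w^×, 0],[v^×, w^×]]` for `ζ = (w, v)`. -/
def adMat (w v : Fin 3 → ℝ) : Matrix (Fin 3 ⊕ Fin 3) (Fin 3 ⊕ Fin 3) ℝ :=
  Matrix.fromBlocks (skew w) 0 (skew v) (skew w)

/-- The 3×6 matrix `G(a) = [a^× −I]`. -/
def Gmat (a : Fin 3 → ℝ) : Matrix (Fin 3) (Fin 3 ⊕ Fin 3) ℝ :=
  Matrix.of fun i => Sum.elim (fun j => skew a i j) (fun j => (-(1 : Matrix (Fin 3) (Fin 3) ℝ)) i j)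

/-- The stacked 9×6 matrix `𝔾 = [G(a₁); G(a₂); G(a₃)]`. -/
def stack3 (a₁ a₂ a₃ : Fin 3 → ℝ) :
    Matrix (Fin 3 ⊕ (Fin 3 ⊕ Fin 3)) (Fin 3 ⊕ Fin 3) ℝ :=
  Matrix.of (Sum.elim (fun r => Gmat a₁ r)
    (Sum.elim (fun r => Gmat a₂ r) (fun r => Gmat a₃ r)))

lemma cross_aux (u v w : Fin 3 → ℝ) (h : LinearIndependent ℝ ![u, v])
    (hu : ∀ i j, w i * u j = u i * w j) (hv : ∀ i j, w i * v j = v i * w j) : w = 0 := by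
  rw [LinearIndependent.pair_iff] at h
  funext k
  by_contra hk
  have hk : w k ≠ 0 := hk
  have h1 := h (v k) (-u k) (by
    funext j
    have : w k * (v k * u j - u k * v j) = 0 := by
      linear_combination v k * hu k j - u k * hv k j
    have := (mul_eq_zero.mp this).resolve_left hk
    simp only [Pi.add_apply, Pi.smul_apply, smul_eq_mul, Pi.zero_apply]
    linarith)
  have h2 := h (w k) 0 (by
    funext j
    have h3 : u k = 0 := by linarith [h1.2]
    have := hu k j
    rw [h3] at this
    simpa using this)
  exact hk h2.1

lemma Gmat_ker (a₁ a₂ a₃ : Fin 3 → ℝ)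
    (hind : LinearIndependent ℝ ![a₁ - a₂, a₁ - a₃]) (Ω ν : Fin 3 → ℝ)
    (h1 : Gmat a₁ *ᵥ Sum.elim Ω ν = 0)
    (h2 : Gmat a₂ *ᵥ Sum.elim Ω ν = 0)
    (h3 : Gmat a₃ *ᵥ Sum.elim Ω ν = 0) : Ω = 0 ∧ ν = 0 := by
  have key : ∀ a : Fin 3 → ℝ, Gmat a *ᵥ Sum.elim Ω ν = 0 →
      (a 1 * Ω 2 - a 2 * Ω 1 = ν 0 ∧ a 2 * Ω 0 - a 0 * Ω 2 = ν 1 ∧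
        a 0 * Ω 1 - a 1 * Ω 0 = ν 2) := by
    intro a h
    have e0 := congrFun h 0
    have e1 := congrFun h 1
    have e2 := congrFun h 2
    simp [Gmat, skew, Matrix.mulVec, dotProduct, Fin.sum_univ_three, Matrix.one_apply] at e0 e1 e2
    refine ⟨?_, ?_, ?_⟩ <;> linarith
  obtain ⟨p0, p1, p2⟩ := key _ h1
  obtain ⟨q0, q1, q2⟩ := key _ h2
  obtain ⟨r0, r1, r2⟩ := key _ h3
  have hΩ : Ω = 0 := by
    apply cross_aux _ _ Ω hind
    · intro i j
      fin_cases i <;> fin_cases j <;> simp <;> linarith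
    · intro i j
      fin_cases i <;> fin_cases j <;> simp <;> linarith
  refine ⟨hΩ, ?_⟩
  subst hΩ
  simp at p0 p1 p2
  funext k
  fin_cases k <;> simp [← p0, ← p1, ← p2]

/-- for three non-collinear points the stacked matrix
`𝔾 = [G(a₁); G(a₂); G(a₃)]` has full column rank 6; equivalently
`G(aⱼ)ξ = 0` for `j = 1,2,3` forces `ξ = 0`. -/
theorem stacked_full_column_rank (a₁ a₂ a₃ : Fin 3 → ℝ)
    (hind : LinearIndependent ℝ ![a₁ - a₂, a₁ - a₃]) :
    (stack3 a₁ a₂ a₃).rank = 6 ∧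
      ∀ Ω ν : Fin 3 → ℝ,
        Gmat a₁ *ᵥ Sum.elim Ω ν = 0 →
        Gmat a₂ *ᵥ Sum.elim Ω ν = 0 →
        Gmat a₃ *ᵥ Sum.elim Ω ν = 0 →
        Ω = 0 ∧ ν = 0 := by
  refine ⟨?_, Gmat_ker a₁ a₂ a₃ hind⟩
  have hinj : Function.Injective (stack3 a₁ a₂ a₃).mulVecLin := by
    rw [injective_iff_map_eq_zero]
    intro x hx
    have hx' : stack3 a₁ a₂ a₃ *ᵥ x = 0 := hx
    have hs : x = Sum.elim (x ∘ Sum.inl) (x ∘ Sum.inr) := (Sum.elim_comp_inl_inr x).symm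
    rw [hs] at hx'
    obtain ⟨h1, h2⟩ := Gmat_ker a₁ a₂ a₃ hind (x ∘ Sum.inl) (x ∘ Sum.inr)
      (funext fun r => congrFun hx' (Sum.inl r))
      (funext fun r => congrFun hx' (Sum.inr (Sum.inl r)))
      (funext fun r => congrFun hx' (Sum.inr (Sum.inr r)))
    rw [hs, h1, h2]
    funext k
    cases k <;> rfl
  rw [Matrix.rank, LinearMap.finrank_range_of_inj hinj]
  simp
end
end

section
/- Let a₁, a₂, a₃ ∈ ℝ³ be not collinear (a₁ − a₂ and a₁ − a₃ linearly independent), let 𝔾 ∈ ℝ^{9×6} be the stacked matrix [G(a₁); G(a₂); G(a₃)], and suppose ξ ∈ ℝ⁶ satisfies vⱼ = G(aⱼ)ξ for j = 1, 2, 3. Then 𝔾ᵀ𝔾 is invertible and ξ = (𝔾ᵀ𝔾)⁻¹ 𝔾ᵀ 𝕍, where 𝕍 ∈ ℝ⁹ is the stacked vector of v₁, v₂, v₃; that is, the rigid-body velocities ξ are uniquely determined from the velocities of three non-collinear feature points by the pseudo-inverse formula. -/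
open Matrix

noncomputable section

/-- with three non-collinear feature points, `𝔾ᵀ𝔾` is invertible and the
rigid-body velocities are recovered by the pseudo-inverse formula
`ξ = (𝔾ᵀ𝔾)⁻¹ 𝔾ᵀ 𝕍`. -/
theorem pseudo_inverse_velocity (a₁ a₂ a₃ : Fin 3 → ℝ)
    (hind : LinearIndependent ℝ ![a₁ - a₂, a₁ - a₃])
    (ξ : Fin 3 ⊕ Fin 3 → ℝ) (v₁ v₂ v₃ : Fin 3 → ℝ)
    (hv₁ : v₁ = Gmat a₁ *ᵥ ξ) (hv₂ : v₂ = Gmat a₂ *ᵥ ξ) (hv₃ : v₃ = Gmat a₃ *ᵥ ξ) :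
    IsUnit ((stack3 a₁ a₂ a₃)ᵀ * stack3 a₁ a₂ a₃) ∧
      ξ = ((stack3 a₁ a₂ a₃)ᵀ * stack3 a₁ a₂ a₃)⁻¹ *ᵥ
        ((stack3 a₁ a₂ a₃)ᵀ *ᵥ Sum.elim v₁ (Sum.elim v₂ v₃)) := by
  have hker : ∀ x : Fin 3 ⊕ Fin 3 → ℝ, stack3 a₁ a₂ a₃ *ᵥ x = 0 → x = 0 := by
    intro x hx
    have e : ∀ r, (stack3 a₁ a₂ a₃ *ᵥ x) r = 0 := fun r => by rw [hx]; rfl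
    have e1 := fun r : Fin 3 => e (Sum.inl r)
    have e2 := fun r : Fin 3 => e (Sum.inr (Sum.inl r))
    have e3 := fun r : Fin 3 => e (Sum.inr (Sum.inr r))
    simp [stack3, Gmat, skew, Matrix.mulVec, dotProduct, Fin.forall_fin_succ,
      Fin.sum_univ_three, Matrix.one_apply] at e1 e2 e3
    obtain ⟨e10, e11, e12⟩ := e1
    obtain ⟨e20, e21, e22⟩ := e2
    obtain ⟨e30, e31, e32⟩ := e3
    have hp : ∀ i j, (a₁ - a₂) i * x (Sum.inl j) = (a₁ - a₂) j * x (Sum.inl i) := by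
      intro i j
      fin_cases i <;> fin_cases j <;> simp <;> linarith
    have hq : ∀ i j, (a₁ - a₃) i * x (Sum.inl j) = (a₁ - a₃) j * x (Sum.inl i) := by
      intro i j
      fin_cases i <;> fin_cases j <;> simp <;> linarith
    generalize a₁ - a₂ = p at hp hind
    generalize a₁ - a₃ = q at hq hind
    have hp0 : p ≠ 0 := hind.ne_zero 0
    rw [LinearIndependent.pair_iff] at hind
    have hz : ∀ i k, x (Sum.inl i) * p k = 0 := by
      intro i k
      have := (hind (q k * x (Sum.inl i)) (-(x (Sum.inl i) * p k)) (by
        ext j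
        simp only [Pi.add_apply, Pi.smul_apply, smul_eq_mul, Pi.zero_apply]
        linear_combination q k * hp j i + p i * hq k j + q j * hp i k)).2
      linarith
    obtain ⟨k, hk⟩ := Function.ne_iff.mp hp0
    have hΩ : ∀ i, x (Sum.inl i) = 0 := fun i => (mul_eq_zero.mp (hz i k)).resolve_right hk
    simp only [hΩ] at e10 e11 e12
    ext r
    rcases r with r | r
    · exact hΩ r
    · fin_cases r <;> simp <;> linarith
  have hU : IsUnit ((stack3 a₁ a₂ a₃)ᵀ * stack3 a₁ a₂ a₃) := by
    rw [← Matrix.mulVec_injective_iff_isUnit]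
    intro x y hxy
    rw [← sub_eq_zero]
    apply hker
    have h0 : ((stack3 a₁ a₂ a₃)ᵀ * stack3 a₁ a₂ a₃) *ᵥ (x - y) = 0 := by
      rw [Matrix.mulVec_sub, sub_eq_zero]; exact hxy
    have h1 := Matrix.conjTranspose_mul_self_mulVec_eq_zero (stack3 a₁ a₂ a₃) (x - y)
    rw [Matrix.conjTranspose_eq_transpose_of_trivial] at h1
    exact h1.mp h0
  refine ⟨hU, ?_⟩
  have hV : Sum.elim v₁ (Sum.elim v₂ v₃) = stack3 a₁ a₂ a₃ *ᵥ ξ := by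
    subst hv₁ hv₂ hv₃
    ext r
    rcases r with r | r | r <;> rfl
  rw [hV, Matrix.mulVec_mulVec, Matrix.mulVec_mulVec, Matrix.mul_assoc,
    Matrix.nonsing_inv_mul _ ((Matrix.isUnit_iff_isUnit_det _).mp hU), Matrix.one_mulVec]
end
end

section
/- Let D ∈ ℝ^{3×β} have rank at least 2, let R ∈ SO(3), set L = Rᵀ D (perfect measurements), and let W ∈ ℝ^{β×β} be symmetric positive definite. Then for R̂ ∈ SO(3), the Wahba cost U_r(R̂) = ½ trace((D − R̂L)ᵀ(D − R̂L)W) vanishes if and only if R̂ = R. In particular, a rotation matrix Q ∈ SO(3) satisfying Q d = d for all columns d of a rank-≥2 matrix D must equal the identity. -/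
open Matrix

noncomputable section

/-- A rotation fixing the columns of a matrix of rank at least two is the identity. -/
theorem rotation_eq_one_aux {β : ℕ} (D : Matrix (Fin 3) (Fin β) ℝ) (hD : 2 ≤ D.rank)
    (Q : Matrix (Fin 3) (Fin 3) ℝ) (hQ : Qᵀ * Q = 1) (hdet : Q.det = 1) (h : Q * D = D) :
    Q = 1 := by
  obtain ⟨A, rfl⟩ : ∃ A, Q = 1 + A := ⟨Q - 1, by abel⟩
  have hAD : A * D = 0 := by
    rw [Matrix.add_mul, Matrix.one_mul] at h
    simpa using h
  have hr := rank_add_rank_le_card_of_mul_eq_zero hAD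
  rw [Fintype.card_fin] at hr
  have hA1 : A.rank ≤ 1 := by omega
  have hp := (Submodule.finrank_le_one_iff_isPrincipal (LinearMap.range A.mulVecLin)).1 hA1
  obtain ⟨u, hu⟩ := hp
  have hc : ∀ j, ∃ c : ℝ, c • u = A.col j := by
    intro j
    have : A.col j ∈ LinearMap.range A.mulVecLin := ⟨Pi.single j 1, by simp⟩
    rw [hu] at this
    exact Submodule.mem_span_singleton.1 this
  choose c hc using hc
  have hAe : A = replicateCol Unit u * replicateRow Unit c := by
    ext i j
    have := congrFun (hc j) i
    simp [Matrix.mul_apply] at this ⊢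
    linarith
  have ht : A.trace = 0 := by
    rw [hAe, det_one_add_replicateCol_mul_replicateRow] at hdet
    rw [hAe]
    simp [Matrix.trace, Matrix.mul_apply, dotProduct, mul_comm] at hdet ⊢
    linarith
  have h2 : (Aᵀ * A).trace = 0 := by
    have e : Aᵀ * A = - A - Aᵀ := by
      have e1 : Aᵀ * A = (1 + A)ᵀ * (1 + A) - 1 - A - Aᵀ := by
        rw [transpose_add, transpose_one]
        noncomm_ring
      rw [e1, hQ, sub_self, zero_sub]
    rw [e, trace_sub, trace_neg, trace_transpose, ht]
    simp
  have h3 : A = 0 := by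
    rw [← conjTranspose_eq_transpose_of_trivial] at h2
    exact trace_conjTranspose_mul_self_eq_zero_iff.1 h2
  rw [h3, add_zero]

/-- Vanishing of the weighted trace forces the residual to vanish. -/
theorem residual_eq_zero_aux {β : ℕ} (M : Matrix (Fin 3) (Fin β) ℝ)
    (W : Matrix (Fin β) (Fin β) ℝ) (hW : W.PosDef) (h : (Mᵀ * M * W).trace = 0) : M = 0 := by
  have e : (Mᵀ * M * W).trace = ∑ i, M i ⬝ᵥ (W *ᵥ M i) := by
    rw [Matrix.mul_assoc, trace_mul_comm, Matrix.mul_assoc, Matrix.trace]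
    simp only [Matrix.diag, Matrix.mul_apply, dotProduct, mulVec, transpose_apply]
  have key : ∀ x : Fin β → ℝ, x ≠ 0 → 0 < x ⬝ᵥ (W *ᵥ x) := fun x hx => by
    simpa using hW.dotProduct_mulVec_pos hx
  rw [e, Finset.sum_eq_zero_iff_of_nonneg] at h
  · ext i j
    by_contra hne
    have hx : M i ≠ 0 := fun h0 => hne (by simpa using congrFun h0 j)
    exact (key _ hx).ne' (h i (Finset.mem_univ i))
  · intro i _
    by_cases hx : M i = 0
    · simp [hx]
    · exact (key _ hx).le

/-- with perfect measurements `L = RᵀD` and `rank D ≥ 2`, the Wahba cost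
vanishes iff `R̂ = R`; in particular a rotation fixing all columns of a rank-≥2 matrix `D`
is the identity. -/
theorem wahba_unique_minimum {β : ℕ} (D : Matrix (Fin 3) (Fin β) ℝ) (hD : 2 ≤ D.rank)
    (R : Matrix (Fin 3) (Fin 3) ℝ) (hR : Rᵀ * R = 1) (hdet : R.det = 1)
    (W : Matrix (Fin β) (Fin β) ℝ) (hW : W.PosDef)
    (L : Matrix (Fin 3) (Fin β) ℝ) (hL : L = Rᵀ * D) :
    (∀ Rhat : Matrix (Fin 3) (Fin 3) ℝ, Rhatᵀ * Rhat = 1 → Rhat.det = 1 →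
      ((1 / 2 : ℝ) * ((D - Rhat * L)ᵀ * (D - Rhat * L) * W).trace = 0 ↔ Rhat = R)) ∧
    (∀ Q : Matrix (Fin 3) (Fin 3) ℝ, Qᵀ * Q = 1 → Q.det = 1 → Q * D = D → Q = 1) := by
  have hR' : R * Rᵀ = 1 := mul_eq_one_comm.1 hR
  refine ⟨fun Rhat h1 h2 => ⟨fun h => ?_, fun h => ?_⟩, fun Q h1 h2 h3 =>
    rotation_eq_one_aux D hD Q h1 h2 h3⟩
  · have hM := residual_eq_zero_aux _ W hW (by linarith)
    have hfix : (Rhat * Rᵀ) * D = D := by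
      rw [hL, ← Matrix.mul_assoc] at hM
      exact (sub_eq_zero.1 hM).symm
    have hone := rotation_eq_one_aux D hD (Rhat * Rᵀ) (by
      rw [transpose_mul, transpose_transpose, Matrix.mul_assoc, ← Matrix.mul_assoc Rhatᵀ, h1,
        Matrix.one_mul, hR']) (by rw [det_mul, det_transpose, h2, hdet, one_mul]) hfix
    calc Rhat = Rhat * (Rᵀ * R) := by rw [hR, Matrix.mul_one]
      _ = R := by rw [← Matrix.mul_assoc, hone, Matrix.one_mul]
  · subst h
    rw [hL, ← Matrix.mul_assoc, hR', Matrix.one_mul]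
    simp
end
end

section
/- Energy dissipation along the variational estimator (core of Theorem 1). Let D ∈ ℝ^{3×β} and p̄ ∈ ℝ³ be constant, W ∈ ℝ^{β×β} symmetric positive definite, κ > 0, 𝕁, 𝔻 ∈ ℝ^{6×6} symmetric positive definite, and Φ : [0,∞) → [0,∞) a C² function with Φ(0)=0 and Φ'(x) > 0. Let g(t) = [[R(t), b(t)],[0,1]] be a C¹ curve with ġ = g ξ(t)^∨, and suppose measurements are perfect: L(t) = R(t)ᵀ D, ā(t) = R(t)ᵀ(p̄ − b(t)), ξᵐ(t) = ξ(t). Let (ĝ(t), φ(t)), with ĝ(t) = [[R̂(t), b̂(t)],[0,1]], be a C¹ solution of the estimator equations 𝕁 φ̇ = (ad_φ)ᵀ 𝕁 φ − Z − 𝔻 φ, ξ̂ = ξ − Ad_{ĝ⁻¹} φ, ĝ̇ = ĝ ξ̂^∨, where y = p̄ − R̂ ā − b̂, S_Γ(R̂) = vex(D W Lᵀ R̂ᵀ − R̂ L W Dᵀ), U_r = ½⟨D − R̂L, (D − R̂L)W⟩, and Z = (Φ'(U_r) S_Γ(R̂) + κ p̄^× y, κ y) ∈ ℝ⁶. Then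 the total energy V(t) = ½ φᵀ 𝕁 φ + Φ(U_r) + ½ κ ‖y‖² satisfies dV/dt = − φᵀ 𝔻 φ ≤ 0 for all t; i.e., the estimator dissipates the energy content of the estimation errors. -/
open Matrix

noncomputable section

/-- Entrywise derivative of a matrix curve. -/
def MD {m n : Type*} (A : ℝ → Matrix m n ℝ) (A' : Matrix m n ℝ) (t : ℝ) : Prop :=
  ∀ i j, HasDerivAt (fun s => A s i j) (A' i j) t

/-- Entrywise derivative of a vector curve. -/
def VD {m : Type*} (A : ℝ → m → ℝ) (A' : m → ℝ) (t : ℝ) : Prop :=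
  ∀ i, HasDerivAt (fun s => A s i) (A' i) t

lemma MD.mul {m n p : Type*} [Fintype n] {A : ℝ → Matrix m n ℝ} {A' : Matrix m n ℝ}
    {B : ℝ → Matrix n p ℝ} {B' : Matrix n p ℝ} {t : ℝ} (hA : MD A A' t) (hB : MD B B' t) :
    MD (fun s => A s * B s) (A' * B t + A t * B') t := by
  intro i j
  simp only [Matrix.mul_apply, Matrix.add_apply, ← Finset.sum_add_distrib]
  exact HasDerivAt.fun_sum fun k _ => (hA i k).mul (hB k j)

lemma MD.mulVec {m n : Type*} [Fintype n] {A : ℝ → Matrix m n ℝ} {A' : Matrix m n ℝ}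
    {B : ℝ → n → ℝ} {B' : n → ℝ} {t : ℝ} (hA : MD A A' t) (hB : VD B B' t) :
    VD (fun s => A s *ᵥ B s) (A' *ᵥ B t + A t *ᵥ B') t := by
  intro i
  simp only [Matrix.mulVec, dotProduct, Pi.add_apply, ← Finset.sum_add_distrib]
  exact HasDerivAt.fun_sum fun k _ => (hA i k).mul (hB k)

lemma VD.dot {n : Type*} [Fintype n] {A : ℝ → n → ℝ} {A' : n → ℝ}
    {B : ℝ → n → ℝ} {B' : n → ℝ} {t : ℝ} (hA : VD A A' t) (hB : VD B B' t) :
    HasDerivAt (fun s => A s ⬝ᵥ B s) (A' ⬝ᵥ B t + A t ⬝ᵥ B') t := by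
  simp only [dotProduct, ← Finset.sum_add_distrib]
  exact HasDerivAt.fun_sum fun k _ => (hA k).mul (hB k)

lemma MD.transpose {m n : Type*} {A : ℝ → Matrix m n ℝ} {A' : Matrix m n ℝ} {t : ℝ}
    (hA : MD A A' t) : MD (fun s => (A s)ᵀ) A'ᵀ t := fun i j => hA j i

lemma MD.const {m n : Type*} (A : Matrix m n ℝ) (t : ℝ) : MD (fun _ => A) 0 t :=
  fun i j => hasDerivAt_const t (A i j)

lemma VD.const {m : Type*} (A : m → ℝ) (t : ℝ) : VD (fun _ => A) 0 t :=
  fun i => hasDerivAt_const t (A i)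

lemma MD.sub {m n : Type*} {A B : ℝ → Matrix m n ℝ} {A' B' : Matrix m n ℝ} {t : ℝ}
    (hA : MD A A' t) (hB : MD B B' t) : MD (fun s => A s - B s) (A' - B') t :=
  fun i j => (hA i j).sub (hB i j)

lemma VD.sub {m : Type*} {A B : ℝ → m → ℝ} {A' B' : m → ℝ} {t : ℝ}
    (hA : VD A A' t) (hB : VD B B' t) : VD (fun s => A s - B s) (A' - B') t :=
  fun i => (hA i).sub (hB i)

lemma MD.trace {n : Type*} [Fintype n] {A : ℝ → Matrix n n ℝ} {A' : Matrix n n ℝ} {t : ℝ}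
    (hA : MD A A' t) : HasDerivAt (fun s => (A s).trace) A'.trace t := by
  simp only [Matrix.trace, Matrix.diag]
  exact HasDerivAt.fun_sum fun k _ => hA k k

lemma skew_conj (M : Matrix (Fin 3) (Fin 3) ℝ) (h : M.det = 1) (x : Fin 3 → ℝ) :
    M * skew (Mᵀ *ᵥ x) * Mᵀ = skew x := by
  have e : M * skew (Mᵀ *ᵥ x) * Mᵀ = M.det • skew x := by
    ext i j
    fin_cases i <;> fin_cases j <;>
      simp [skew, Matrix.mul_apply, Matrix.mulVec, dotProduct, Fin.sum_univ_three,
        Matrix.det_fin_three] <;> ring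
  rw [e, h, one_smul]

lemma skew_sub (x z : Fin 3 → ℝ) : skew (x - z) = skew x - skew z := by
  ext i j
  fin_cases i <;> fin_cases j <;> simp [skew] <;> ring

lemma skew_neg (x : Fin 3 → ℝ) : skew (-x) = -skew x := by
  ext i j
  fin_cases i <;> fin_cases j <;> simp [skew]

lemma skew_transpose (x : Fin 3 → ℝ) : (skew x)ᵀ = -skew x := by
  ext i j
  fin_cases i <;> fin_cases j <;> simp [skew]

lemma trace_skew_mul (x : Fin 3 → ℝ) (A : Matrix (Fin 3) (Fin 3) ℝ) :
    (skew x * A).trace = x ⬝ᵥ vex (Aᵀ - A) := by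
  simp only [Matrix.trace, Matrix.diag, Matrix.mul_apply, Fin.sum_univ_three]
  simp [skew, vex, dotProduct, Fin.sum_univ_three]
  ring

lemma trace_skew_symm (x : Fin 3 → ℝ) (A : Matrix (Fin 3) (Fin 3) ℝ) (h : Aᵀ = A) :
    (skew x * A).trace = 0 := by
  rw [trace_skew_mul, h, sub_self]
  simp [vex, dotProduct, Fin.sum_univ_three]

lemma adMat_self (w v : Fin 3 → ℝ) : adMat w v *ᵥ Sum.elim w v = 0 := by
  rw [adMat, Matrix.fromBlocks_mulVec]
  ext i
  rcases i with i | i <;> fin_cases i <;>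
    simp [skew, Matrix.mulVec, dotProduct, Fin.sum_univ_three] <;> ring

lemma pose_deriv {R : ℝ → Matrix (Fin 3) (Fin 3) ℝ} {b : ℝ → Fin 3 → ℝ} {Ω ν : Fin 3 → ℝ} {t : ℝ}
    (hg : ∀ i j, HasDerivAt (fun s => pose (R s) (b s) i j)
      ((pose (R t) (b t) * hat4 Ω ν) i j) t) :
    MD R (R t * skew Ω) t ∧ VD b (R t *ᵥ ν) t := by
  constructor
  · intro i j
    have := hg (Sum.inl i) (Sum.inl j)
    simpa [pose, hat4, Matrix.fromBlocks_multiply] using this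
  · intro i
    have := hg (Sum.inl i) (Sum.inr 0)
    simpa [pose, hat4, Matrix.fromBlocks_multiply, Matrix.mul_apply, Matrix.mulVec, dotProduct]
      using this

/-- Derivative of the rotational potential. -/
lemma Ur_deriv {β : ℕ} (D : Matrix (Fin 3) (Fin β) ℝ) (W : Matrix (Fin β) (Fin β) ℝ)
    (hW : Wᵀ = W) (Q : ℝ → Matrix (Fin 3) (Fin 3) ℝ) (w : Fin 3 → ℝ) (t : ℝ)
    (hQ : MD Q (-(skew w * Q t)) t) :
    HasDerivAt (fun s => (1 / 2 : ℝ) * ((D - Q s * D)ᵀ * (D - Q s * D) * W).trace)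
      (w ⬝ᵥ vex (D * W * Dᵀ * (Q t)ᵀ - Q t * D * W * Dᵀ)) t := by
  have hE : MD (fun s => D - Q s * D) (skew w * Q t * D) t := by
    have := (MD.const D t).sub (hQ.mul (MD.const D t))
    simpa using this
  have h := (((hE.transpose.mul hE).mul (MD.const W t)).trace).const_mul (1 / 2 : ℝ)
  refine h.congr_deriv ?_
  set E := D - Q t * D with hEdef
  set P := skew w * Q t * D with hP
  have h1 : (Pᵀ * E * W).trace = (Eᵀ * P * W).trace := by
    rw [← Matrix.trace_transpose]
    simp only [Matrix.transpose_mul, Matrix.transpose_transpose, hW]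
    rw [Matrix.trace_mul_comm]
  have h2 : (Eᵀ * P * W).trace = (skew w * (Q t * D * W * Dᵀ)).trace
      - (skew w * (Q t * D * W * (Q t * D)ᵀ)).trace := by
    rw [Matrix.mul_assoc, Matrix.trace_mul_comm, hEdef, Matrix.transpose_sub, Matrix.mul_sub,
      Matrix.trace_sub, hP]
    simp only [Matrix.mul_assoc]
  rw [trace_skew_symm w (Q t * D * W * (Q t * D)ᵀ)
    (by simp only [Matrix.transpose_mul, Matrix.transpose_transpose, hW, Matrix.mul_assoc]),
    sub_zero, trace_skew_mul] at h2
  have h3 : (Q t * D * W * Dᵀ)ᵀ = D * W * Dᵀ * (Q t)ᵀ := by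
    simp only [Matrix.transpose_mul, Matrix.transpose_transpose, hW, Matrix.mul_assoc]
  rw [h3] at h2
  simp only [Matrix.mul_zero, add_zero, Matrix.add_mul, Matrix.trace_add]
  rw [h1, h2]
  ring

/-- Power of the translational residual. -/
lemma power_id (w v p bh y : Fin 3 → ℝ) :
    y ⬝ᵥ (skew w *ᵥ (p - bh - y) - skew bh *ᵥ w + v) = w ⬝ᵥ (skew p *ᵥ y) + v ⬝ᵥ y := by
  simp [skew, Matrix.mulVec, dotProduct, Fin.sum_univ_three]
  ring

/-- energy dissipation along the variational estimator, core of Theorem 1: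
with perfect measurements, along any solution of the estimator equations
`𝕁 φ̇ = ad*_φ 𝕁 φ − Z − 𝔻 φ`, `ξ̂ = ξ − Ad_{ĝ⁻¹} φ`, `ĝ̇ = ĝ ξ̂^∨`,
the total energy `V = ½ φᵀ𝕁φ + Φ(U_r) + ½ κ ‖y‖²` satisfies
`dV/dt = −φᵀ𝔻φ ≤ 0`. -/
theorem estimator_energy_dissipation {β : ℕ}
    (D : Matrix (Fin 3) (Fin β) ℝ) (pbar : Fin 3 → ℝ)
    (W : Matrix (Fin β) (Fin β) ℝ) (hW : W.PosDef)
    (κ : ℝ) (hκ : 0 < κ)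
    (𝕁 𝔻 : Matrix (Fin 3 ⊕ Fin 3) (Fin 3 ⊕ Fin 3) ℝ)
    (h𝕁 : 𝕁.PosDef) (h𝔻 : 𝔻.PosDef)
    (Φ : ℝ → ℝ) (hΦreg : ContDiff ℝ 2 Φ) (hΦ0 : Φ 0 = 0)
    (hΦ' : ∀ x : ℝ, 0 ≤ x → 0 < deriv Φ x)
    -- the true motion: a C¹ curve g = [[R, b],[0,1]] in SE(3) with ġ = g ξ^∨
    (R Rhat : ℝ → Matrix (Fin 3) (Fin 3) ℝ) (b bhat : ℝ → Fin 3 → ℝ)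
    (ξ φ : ℝ → (Fin 3 → ℝ) × (Fin 3 → ℝ))
    (hSO : ∀ t, (R t)ᵀ * R t = 1 ∧ (R t).det = 1)
    (hSOhat : ∀ t, (Rhat t)ᵀ * Rhat t = 1 ∧ (Rhat t).det = 1)
    (hg : ∀ t i j, HasDerivAt (fun s => pose (R s) (b s) i j)
      ((pose (R t) (b t) * hat4 (ξ t).1 (ξ t).2) i j) t)
    -- perfect measurements
    (L : ℝ → Matrix (Fin 3) (Fin β) ℝ) (hL : ∀ t, L t = (R t)ᵀ * D)
    (abar : ℝ → Fin 3 → ℝ) (habar : ∀ t, abar t = (R t)ᵀ *ᵥ (pbar - b t))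
    -- residuals and forcing term of the estimator
    (y : ℝ → Fin 3 → ℝ) (hy : ∀ t, y t = pbar - Rhat t *ᵥ abar t - bhat t)
    (SΓ : ℝ → Fin 3 → ℝ)
    (hSΓ : ∀ t, SΓ t = vex (D * W * (L t)ᵀ * (Rhat t)ᵀ - Rhat t * L t * W * Dᵀ))
    (Ur : ℝ → ℝ)
    (hUr : ∀ t, Ur t = (1 / 2 : ℝ) * ((D - Rhat t * L t)ᵀ * (D - Rhat t * L t) * W).trace)
    (Z : ℝ → Fin 3 ⊕ Fin 3 → ℝ)
    (hZ : ∀ t, Z t = Sum.elim (deriv Φ (Ur t) • SΓ t + κ • (skew pbar *ᵥ y t)) (κ • y t))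
    -- the estimator equations
    (φv : ℝ → Fin 3 ⊕ Fin 3 → ℝ) (hφv : ∀ t, φv t = Sum.elim (φ t).1 (φ t).2)
    (hφ : ∀ t i, HasDerivAt (fun s => φv s i)
      ((𝕁⁻¹ *ᵥ ((adMat (φ t).1 (φ t).2)ᵀ *ᵥ (𝕁 *ᵥ φv t) - Z t - 𝔻 *ᵥ φv t)) i) t)
    (ξhat : ℝ → Fin 3 ⊕ Fin 3 → ℝ)
    (hξhat : ∀ t, ξhat t = Sum.elim (ξ t).1 (ξ t).2 -
      AdMat ((Rhat t)ᵀ) (-((Rhat t)ᵀ *ᵥ bhat t)) *ᵥ φv t)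
    (hghat : ∀ t i j, HasDerivAt (fun s => pose (Rhat s) (bhat s) i j)
      ((pose (Rhat t) (bhat t) *
        hat4 (fun i => ξhat t (Sum.inl i)) (fun i => ξhat t (Sum.inr i))) i j) t)
    -- the total energy
    (V : ℝ → ℝ)
    (hV : ∀ t, V t = (1 / 2 : ℝ) * (φv t ⬝ᵥ (𝕁 *ᵥ φv t)) + Φ (Ur t) +
      (1 / 2 : ℝ) * κ * (y t ⬝ᵥ y t)) :
    ∀ t, HasDerivAt V (-(φv t ⬝ᵥ (𝔻 *ᵥ φv t))) t ∧
      -(φv t ⬝ᵥ (𝔻 *ᵥ φv t)) ≤ 0 := by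
  intro t
  have hpsd : 0 ≤ φv t ⬝ᵥ (𝔻 *ᵥ φv t) := by
    simpa using h𝔻.posSemidef.dotProduct_mulVec_nonneg (φv t)
  refine ⟨?_, by linarith⟩
  have hWs : Wᵀ = W := by simpa using hW.isHermitian.eq
  have hJs : 𝕁ᵀ = 𝕁 := by simpa using h𝕁.isHermitian.eq
  obtain ⟨hR, hb⟩ := pose_deriv (hg t)
  obtain ⟨hRh, hbh⟩ := pose_deriv (hghat t)
  have hRR : (R t)ᵀ * R t = 1 := (hSO t).1
  have hRhRh : Rhat t * (Rhat t)ᵀ = 1 := mul_eq_one_comm.mp (hSOhat t).1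
  set w := (φ t).1 with hw
  set v := (φ t).2 with hv
  have hΩ : (fun i => ξhat t (Sum.inl i)) = (ξ t).1 - (Rhat t)ᵀ *ᵥ w := by
    ext i
    rw [hξhat, hφv, AdMat, Matrix.fromBlocks_mulVec]
    simp [hw, Function.comp_def]
  have hν : (fun i => ξhat t (Sum.inr i)) = (ξ t).2 -
      ((skew (-((Rhat t)ᵀ *ᵥ bhat t)) * (Rhat t)ᵀ) *ᵥ w + (Rhat t)ᵀ *ᵥ v) := by
    ext i
    rw [hξhat, hφv, AdMat, Matrix.fromBlocks_mulVec]
    simp [hw, hv, Function.comp_def]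
  have hconj := skew_conj (Rhat t) (hSOhat t).2
  rw [hΩ] at hRh
  rw [hν] at hbh
  -- relative attitude
  have hQ : MD (fun s => Rhat s * (R s)ᵀ) (-(skew w * (Rhat t * (R t)ᵀ))) t := by
    have := hRh.mul hR.transpose
    convert this using 1
    rw [skew_sub, Matrix.transpose_mul, skew_transpose, ← hconj w]
    simp only [Matrix.mul_sub, Matrix.sub_mul, Matrix.mul_assoc, Matrix.neg_mul, Matrix.mul_neg]
    rw [← Matrix.mul_assoc (Rhat t)ᵀ (Rhat t), (hSOhat t).1, Matrix.one_mul]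
    abel
  have hU : HasDerivAt Ur (w ⬝ᵥ SΓ t) t := by
    have := Ur_deriv D W hWs _ w t hQ
    have e : Ur = fun s => (1 / 2 : ℝ) * ((D - Rhat s * (R s)ᵀ * D)ᵀ *
        (D - Rhat s * (R s)ᵀ * D) * W).trace := by
      funext s
      rw [hUr, hL, Matrix.mul_assoc (Rhat s)]
    rw [e]
    convert this using 3
    rw [hSΓ, hL]
    simp only [Matrix.transpose_mul, Matrix.transpose_transpose, Matrix.mul_assoc]
  have hΦd : HasDerivAt (fun s => Φ (Ur s)) (deriv Φ (Ur t) * (w ⬝ᵥ SΓ t)) t :=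
    ((hΦreg.differentiable (by norm_num)) (Ur t)).hasDerivAt.comp t hU
  -- translational residual
  have hyeq : ∀ s, y s = pbar - (Rhat s * (R s)ᵀ) *ᵥ (pbar - b s) - bhat s := by
    intro s
    rw [hy, habar, Matrix.mulVec_mulVec]
  have hyd : VD y (skew w *ᵥ (pbar - bhat t - y t) - skew (bhat t) *ᵥ w + v) t := by
    have h := ((VD.const pbar t).sub (hQ.mulVec ((VD.const pbar t).sub hb))).sub hbh
    have e : y = fun s => pbar - (Rhat s * (R s)ᵀ) *ᵥ (pbar - b s) - bhat s := funext hyeq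
    have e2 : pbar - bhat t - y t = (Rhat t * (R t)ᵀ) *ᵥ (pbar - b t) := by
      rw [hyeq t]; abel
    rw [e2, e]
    convert h using 1
    have e3 : Rhat t * (skew ((Rhat t)ᵀ *ᵥ bhat t) * (Rhat t)ᵀ) = skew (bhat t) := by
      rw [← Matrix.mul_assoc, hconj]
    have e4 : Rhat t * (R t)ᵀ * R t = Rhat t := by
      rw [Matrix.mul_assoc, hRR, Matrix.mul_one]
    rw [skew_neg]
    simp only [Matrix.mulVec_sub, Matrix.mulVec_add, Matrix.mulVec_mulVec, Matrix.neg_mul,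
      Matrix.mul_neg, Matrix.neg_mulVec, Matrix.mulVec_neg, zero_sub, e3, hRhRh, e4,
      Matrix.one_mulVec]
    abel
  have hyy := (hyd.dot hyd).const_mul ((1 / 2 : ℝ) * κ)
  -- kinetic energy
  have hφd : VD φv _ t := hφ t
  have hK := (hφd.dot ((MD.const 𝕁 t).mulVec hφd)).const_mul (1 / 2 : ℝ)
  have hsum := (hK.add hΦd).add hyy
  have hVe : V = _ := funext hV
  rw [hVe]
  refine hsum.congr_deriv ?_
  have hJdet : IsUnit 𝕁.det := h𝕁.det_pos.ne'.isUnit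
  rw [Matrix.zero_mulVec, zero_add]
  set F := (adMat w v)ᵀ *ᵥ (𝕁 *ᵥ φv t) - Z t - 𝔻 *ᵥ φv t with hF
  have k1 : 𝕁 *ᵥ (𝕁⁻¹ *ᵥ F) = F := by
    rw [Matrix.mulVec_mulVec, Matrix.mul_nonsing_inv _ hJdet, Matrix.one_mulVec]
  have k2 : (𝕁⁻¹ *ᵥ F) ⬝ᵥ (𝕁 *ᵥ φv t) = φv t ⬝ᵥ F := by
    rw [Matrix.dotProduct_mulVec, ← Matrix.mulVec_transpose, hJs, k1, dotProduct_comm]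
  have k3 : φv t ⬝ᵥ ((adMat w v)ᵀ *ᵥ (𝕁 *ᵥ φv t)) = 0 := by
    rw [Matrix.dotProduct_mulVec, Matrix.vecMul_transpose, hφv t, adMat_self, zero_dotProduct]
  have k4 : φv t ⬝ᵥ Z t = deriv Φ (Ur t) * (w ⬝ᵥ SΓ t)
      + κ * (w ⬝ᵥ (skew pbar *ᵥ y t) + v ⬝ᵥ y t) := by
    rw [hφv t, hZ t, sumElim_dotProduct_sumElim, dotProduct_add]
    simp only [dotProduct_smul, smul_eq_mul, ← hw, ← hv]
    ring
  have k5 : φv t ⬝ᵥ F = -(φv t ⬝ᵥ Z t) - φv t ⬝ᵥ (𝔻 *ᵥ φv t) := by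
    rw [hF, dotProduct_sub, dotProduct_sub, k3]; ring
  have k6 := power_id w v pbar (bhat t) (y t)
  have k7 := k6
  rw [dotProduct_comm] at k7
  rw [k1, k2, k5, k4, k6, k7]
  ring
end
end
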